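/- Let d ≥ 1, D := {1,...,d}, let B ⊆ D be nonempty with B' := D \ B. There exists a constant c > 0 depending only on d such that for every Young function Q and every n ≥ m_0 with Q(2^{2n|B|}) ≥ 2^{2n|B|}, the operator norm from L_Q(I^d) to L^1(I^d) satisfies ‖L_{p_n(B)}∘R_{p_n(B')}‖_{L_Q(I^d) → L^1(I^d)} ≥ c · 2^{2n|B|} n^{|B|} / Q(2^{2n|B|}), where p_n(B) denotes the index vector all of whose coordinates equal p_n and the operator norm is sup{ ‖(L_{p_n(B)}∘R_{p_n(B')})(f)‖_{L^1} : ‖f‖_{L_Q} ≤ 1 }. -/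

import Mathlib

open MeasureTheory Filter

noncomputable section

/-- The unit cube `[0,1)^d`. -/
def unitCube (d : ℕ) : Set (Fin d → ℝ) := Set.univ.pi fun _ => Set.Ico (0:ℝ) 1

/-- Lebesgue measure restricted to the unit cube `[0,1)^d`. -/
def cubeMeasure (d : ℕ) : Measure (Fin d → ℝ) := volume.restrict (unitCube d)

/-- The `1`-periodic function equal to `1` on `[0,1/2)` and to `-1` on `[1/2,1)`. -/
def r0 (x : ℝ) : ℝ := if Int.fract x < 1/2 then 1 else -1

/-- The Rademacher functions. -/
def rademacher (n : ℕ) (x : ℝ) : ℝ := r0 (2 ^ n * x)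

/-- The Walsh functions (in Paley enumeration, via binary digits). -/
def walsh (n : ℕ) (x : ℝ) : ℝ :=
  ∏ k ∈ Finset.range (n + 1), if n.testBit k then rademacher k x else 1

/-- The Walsh–Dirichlet kernel `D_n`. -/
def dirichletKernel (n : ℕ) (x : ℝ) : ℝ := ∑ k ∈ Finset.range n, walsh k x

/-- `l_n = ∑_{k=1}^{n-1} 1/k`. -/
def logSum (n : ℕ) : ℝ := ∑ k ∈ Finset.Icc 1 (n - 1), (1 : ℝ) / k

/-- The Nörlund logarithmic kernel `F_n`. -/
def FKernel (n : ℕ) (u : ℝ) : ℝ :=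
  (1 / logSum n) * ∑ i ∈ Finset.Ico 1 n, dirichletKernel (n - i) u / i

/-- The Riesz logarithmic kernel `G_n`. -/
def GKernel (n : ℕ) (u : ℝ) : ℝ :=
  (1 / logSum n) * ∑ i ∈ Finset.Ico 1 n, dirichletKernel i u / i

/-- Walsh–Fourier coefficient of `f` on the unit cube. -/
def walshCoef {d : ℕ} (f : (Fin d → ℝ) → ℝ) (j : Fin d → ℕ) : ℝ :=
  ∫ x, f x * ∏ i, walsh (j i) (x i) ∂(cubeMeasure d)

/-- Rectangular partial sums of the multiple Walsh–Fourier series. -/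
def rectPartialSum {d : ℕ} (f : (Fin d → ℝ) → ℝ) (N : Fin d → ℕ) (x : Fin d → ℝ) : ℝ :=
  ∑ j ∈ Fintype.piFinset (fun i => Finset.range (N i)),
    walshCoef f j * ∏ i, walsh (j i) (x i)

/-- The mixed logarithmic means `(L_{n_B} ∘ R_{n_{B'}})(f)`. -/
def mixedLogMean {d : ℕ} (B : Finset (Fin d)) (f : (Fin d → ℝ) → ℝ)
    (n : Fin d → ℕ) (x : Fin d → ℝ) : ℝ :=
  (∏ j, logSum (n j))⁻¹ *
    ∑ i ∈ Fintype.piFinset (fun j => Finset.Ico 1 (n j)),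
      rectPartialSum f (fun j => if j ∈ B then n j - i j else i j) x / ∏ j, (i j : ℝ)

/-- A Young function: convex, continuous, even, vanishing at `0`, with
`Q(u)/u → ∞` at `+∞` and `Q(u)/u → 0` at `0`. -/
structure YoungFunction where
  toFun : ℝ → ℝ
  nonneg : ∀ u, 0 ≤ toFun u
  convexOn : ConvexOn ℝ Set.univ toFun
  continuous : Continuous toFun
  even : ∀ u, toFun (-u) = toFun u
  map_zero : toFun 0 = 0
  tendsto_atTop : Tendsto (fun u => toFun u / u) atTop atTop
  tendsto_zero : Tendsto (fun u => toFun u / u) (nhdsWithin 0 {(0:ℝ)}ᶜ) (nhds 0)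

/-- The set of admissible constants `k` in the Luxemburg norm of `f`. -/
def orliczSet {d : ℕ} (Q : YoungFunction) (f : (Fin d → ℝ) → ℝ) : Set ℝ :=
  {k | 0 < k ∧ Integrable (fun x => Q.toFun (|f x| / k)) (cubeMeasure d) ∧
    ∫ x, Q.toFun (|f x| / k) ∂(cubeMeasure d) ≤ 1}

/-- `f` belongs to the Orlicz space `L_Q(I^d)`. -/
def MemOrlicz {d : ℕ} (Q : YoungFunction) (f : (Fin d → ℝ) → ℝ) : Prop :=
  Measurable f ∧ (orliczSet Q f).Nonempty

/-- The Luxemburg norm on the Orlicz space `L_Q(I^d)`. -/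
def orliczNorm {d : ℕ} (Q : YoungFunction) (f : (Fin d → ℝ) → ℝ) : ℝ :=
  sInf (orliczSet Q f)

/-- `p_n = 2^{2n} + 2^{2n-2} + ⋯ + 2^0`. -/
def pIdx (n : ℕ) : ℕ := ∑ k ∈ Finset.range (n + 1), 4 ^ k

/-- `m̃ = ⌊ l_{p_{⌊m/2⌋}-1}/16 - 2^15 ⌋`. -/
def mTilde (m : ℕ) : ℤ := ⌊logSum (pIdx (m / 2) - 1) / 16 - 2 ^ 15⌋

/-- `m₀ = min{m : m̃ > 1}`. -/
def m₀ : ℕ := sInf {m : ℕ | 1 < mTilde m}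

/-- The set `Ω_n`. -/
def Omega (n : ℕ) : Set ℝ :=
  ⋃ m ∈ Finset.Icc n (2 * n),
    Set.Ico ((2:ℝ) ^ (-(m:ℤ) - 1) + (2:ℝ) ^ (-(m:ℤ) - mTilde m)) ((2:ℝ) ^ (-(m:ℤ)))

/-- `k`-th binary digit of `x` (the expansion not terminating in `1`'s). -/
def binDigit (k : ℕ) (x : ℝ) : ℕ := (⌊x * 2 ^ (k + 1)⌋).toNat % 2

/-- Dyadic addition on `[0,1)`. -/
def dyadicAdd (x t : ℝ) : ℝ :=
  ∑' k : ℕ, |(binDigit k x : ℝ) - (binDigit k t : ℝ)| / 2 ^ (k + 1)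

/-- Dyadic convolution `f ∗ K` on `[0,1)`. -/
def dyadicConv (f K : ℝ → ℝ) (x : ℝ) : ℝ :=
  ∫ t in Set.Ico (0:ℝ) 1, f t * K (dyadicAdd x t)

/-- Lebesgue measure restricted to `[0,1)`. -/
def unitMeasure : Measure ℝ := volume.restrict (Set.Ico (0:ℝ) 1)

/-- A set `A ⊆ L_Q(I^d)` is nowhere dense w.r.t. the Luxemburg norm. -/
def OrliczNowhereDense {d : ℕ} (Q : YoungFunction) (A : Set ((Fin d → ℝ) → ℝ)) : Prop :=
  ∀ f, MemOrlicz Q f → ∀ ε > 0, ∃ g, MemOrlicz Q g ∧ ∃ δ > 0,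
    (∀ h, MemOrlicz Q h → orliczNorm Q (h - g) < δ → orliczNorm Q (h - f) < ε) ∧
    (∀ h, MemOrlicz Q h → orliczNorm Q (h - g) < δ → h ∉ A)

/-- A set `A ⊆ L_Q(I^d)` is of first Baire category (meager) w.r.t. the Luxemburg norm. -/
def OrliczMeager {d : ℕ} (Q : YoungFunction) (A : Set ((Fin d → ℝ) → ℝ)) : Prop :=
  ∃ F : ℕ → Set ((Fin d → ℝ) → ℝ), (∀ k, OrliczNowhereDense Q (F k)) ∧ A ⊆ ⋃ k, F k

lemma r0_eq (x : ℝ) : r0 x = 1 ∨ r0 x = -1 := by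
  unfold r0; split_ifs <;> simp

lemma rad_eq (k : ℕ) (x : ℝ) : rademacher k x = 1 ∨ rademacher k x = -1 := r0_eq _

lemma rad_sq (k : ℕ) (x : ℝ) : rademacher k x * rademacher k x = 1 := by
  rcases rad_eq k x with h | h <;> rw [h] <;> norm_num

lemma abs_rad (k : ℕ) (x : ℝ) : |rademacher k x| = 1 := by
  rcases rad_eq k x with h | h <;> rw [h] <;> norm_num

lemma measurable_rad (k : ℕ) : Measurable (rademacher k) := by
  unfold rademacher r0
  refine Measurable.ite ?_ measurable_const measurable_const
  exact measurableSet_lt (by fun_prop) measurable_const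

lemma measurable_walsh (n : ℕ) : Measurable (walsh n) := by
  unfold walsh
  refine Finset.measurable_fun_prod _ fun k _ => ?_
  split_ifs
  · exact measurable_rad k
  · exact measurable_const

lemma abs_walsh (n : ℕ) (x : ℝ) : |walsh n x| = 1 := by
  unfold walsh
  rw [Finset.abs_prod]
  refine Finset.prod_eq_one fun k _ => ?_
  split_ifs
  · exact abs_rad k x
  · simp

lemma walsh_eq (n K : ℕ) (h : n < 2 ^ K) (x : ℝ) :
    walsh n x = ∏ k ∈ Finset.range K, if n.testBit k then rademacher k x else 1 := by
  have key : ∀ A : ℕ, n < 2 ^ A → ∀ C, A ≤ C →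
      (∏ k ∈ Finset.range A, if n.testBit k then rademacher k x else 1)
        = ∏ k ∈ Finset.range C, if n.testBit k then rademacher k x else 1 := by
    intro A hA C hAC
    refine Finset.prod_subset (Finset.range_mono hAC) fun k _ hk => ?_
    have hk' : A ≤ k := by simpa using hk
    have : n < 2 ^ k := lt_of_lt_of_le hA (Nat.pow_le_pow_right (by norm_num) hk')
    simp [Nat.testBit_lt_two_pow this]
  have h1 : n < 2 ^ (n+1) := lt_trans (Nat.lt_succ_self n) Nat.lt_two_pow_self
  unfold walsh
  rw [key (n+1) h1 _ (le_max_left (n+1) K), key K h _ (le_max_right (n+1) K)]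

lemma walsh_zero (x : ℝ) : walsh 0 x = 1 := by
  rw [walsh_eq 0 0 (by norm_num)]; simp

lemma walsh_add (s j : ℕ) (h : j < 2 ^ s) (x : ℝ) :
    walsh (2 ^ s + j) x = rademacher s x * walsh j x := by
  rw [walsh_eq (2 ^ s + j) (s+1) (by rw [pow_succ]; omega), walsh_eq j s h,
    Finset.prod_range_succ, mul_comm]
  congr 1
  · rw [Nat.testBit_two_pow_add_eq, Nat.testBit_lt_two_pow h]; simp
  · refine Finset.prod_congr rfl fun k hk => ?_
    rw [Nat.testBit_two_pow_add_gt (by simpa using hk)]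

instance : IsProbabilityMeasure unitMeasure := by
  constructor
  simp [unitMeasure]

lemma integrable_walsh (n : ℕ) : Integrable (walsh n) unitMeasure := by
  refine Integrable.of_bound (measurable_walsh n).aestronglyMeasurable 1 ?_
  exact Filter.Eventually.of_forall fun x => by rw [Real.norm_eq_abs, abs_walsh]

lemma r0_add_int (x : ℝ) (m : ℕ) : r0 (x + m) = r0 x := by
  unfold r0; rw [Int.fract_add_natCast]

lemma r0_add_half (x : ℝ) : r0 (x + 1/2) = - r0 x := by
  unfold r0
  have h0 := Int.fract_nonneg x
  have h1 := Int.fract_lt_one x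
  by_cases h : Int.fract x < 1/2
  · have : Int.fract (x + 1/2) = Int.fract x + 1/2 := by
      rw [Int.fract_eq_iff]
      refine ⟨by linarith, by linarith, ⌊x⌋, ?_⟩
      have := Int.floor_add_fract x
      linarith
    rw [this, if_neg (by linarith), if_pos h]
  · have : Int.fract (x + 1/2) = Int.fract x - 1/2 := by
      rw [Int.fract_eq_iff]
      refine ⟨by linarith, by linarith, ⌊x⌋ + 1, ?_⟩
      have := Int.floor_add_fract x
      push_cast
      linarith
    rw [this, if_pos (by linarith), if_neg h]; norm_num

lemma integral_walsh (n : ℕ) (hn : n ≠ 0) : ∫ x, walsh n x ∂unitMeasure = 0 := by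
  have hex : ∃ s, n.testBit s = true := by
    by_contra hcon
    push Not at hcon
    exact hn (Nat.eq_of_testBit_eq fun i => by simpa using hcon i)
  classical
  obtain ⟨s, hs, hmin⟩ : ∃ s, n.testBit s = true ∧ ∀ k < s, n.testBit k ≠ true :=
    ⟨Nat.find hex, Nat.find_spec hex, fun k hk => Nat.find_min hex hk⟩
  have hper : Function.Periodic (walsh n) 1 := by
    intro x
    unfold walsh
    refine Finset.prod_congr rfl fun k _ => ?_
    split_ifs
    · unfold rademacher
      have := r0_add_int (2 ^ k * x) (2 ^ k)
      rw [← this]; congr 1; push_cast; ring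
    · rfl
  have hanti : ∀ x, walsh n (x + (1/2) * (1 / 2 ^ s)) = - walsh n x := by
    intro x
    have hmem : s ∈ Finset.range (n+1) := by
      by_contra hcon
      have h1 : n < 2 ^ s := lt_of_lt_of_le (Nat.lt_two_pow_self)
        (Nat.pow_le_pow_right (by norm_num) (by simp at hcon; omega))
      rw [Nat.testBit_lt_two_pow h1] at hs
      exact absurd hs (by simp)
    unfold walsh
    rw [← Finset.mul_prod_erase _ _ hmem, ← Finset.mul_prod_erase _ _ hmem, if_pos hs, if_pos hs,
      ← neg_mul]
    congr 1
    · unfold rademacher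
      rw [← r0_add_half]
      congr 1
      field_simp
    · refine Finset.prod_congr rfl fun k hk => ?_
      split_ifs with hb
      · have hsk : s < k := by
          rcases Nat.lt_trichotomy k s with h | h | h
          · exact absurd hb (hmin k h)
          · simp [h] at hk
          · exact h
        obtain ⟨e, rfl⟩ := Nat.exists_eq_add_of_lt hsk
        unfold rademacher
        have := r0_add_int (2 ^ (s+e+1) * x) (2 ^ e)
        rw [← this]; congr 1; push_cast
        rw [pow_succ, pow_add]; field_simp
      · rfl
  have h1 : ∫ x, walsh n x ∂unitMeasure = ∫ x in (0:ℝ)..1, walsh n x := by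
    rw [intervalIntegral.integral_of_le zero_le_one, unitMeasure, integral_Ico_eq_integral_Ioc]
  rw [h1]
  have h2 := hper.intervalIntegral_add_eq 0 ((1/2) * (1 / 2 ^ s))
  have h3 : ∫ x in (0:ℝ)..1, walsh n (x + (1/2) * (1 / 2 ^ s))
      = ∫ x in (0 + (1/2) * (1 / 2 ^ s):ℝ)..(1 + (1/2) * (1 / 2 ^ s)), walsh n x :=
    intervalIntegral.integral_comp_add_right _ _
  simp_rw [hanti] at h3
  rw [intervalIntegral.integral_neg] at h3
  rw [zero_add] at h2 h3
  rw [add_comm 1 ((1/2 : ℝ) * (1 / 2 ^ s)), ← h2] at h3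
  linarith

lemma dk_zero (x : ℝ) : dirichletKernel 0 x = 0 := by simp [dirichletKernel]

lemma dk_add (s r : ℕ) (h : r ≤ 2 ^ s) (x : ℝ) :
    dirichletKernel (2 ^ s + r) x = dirichletKernel (2 ^ s) x + rademacher s x * dirichletKernel r x := by
  unfold dirichletKernel
  rw [Finset.sum_range_add, Finset.mul_sum]
  congr 1
  refine Finset.sum_congr rfl fun k hk => walsh_add s k ?_ x
  have := Finset.mem_range.1 hk
  omega

lemma dk_pow_succ (s : ℕ) (x : ℝ) :
    dirichletKernel (2 ^ (s+1)) x = (1 + rademacher s x) * dirichletKernel (2 ^ s) x := by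
  rw [pow_succ, mul_two, dk_add s _ le_rfl]; ring

lemma dk_pow_cases (s : ℕ) (x : ℝ) :
    dirichletKernel (2 ^ s) x = 0 ∨ dirichletKernel (2 ^ s) x = 2 ^ s := by
  induction s with
  | zero => right; simp [dirichletKernel, walsh_zero]
  | succ s ih =>
    rw [dk_pow_succ]
    rcases rad_eq s x with h | h <;> rcases ih with h' | h' <;> rw [h, h']
    · left; ring
    · right; ring
    · left; ring
    · left; ring

lemma dk_pow_nonneg (s : ℕ) (x : ℝ) : 0 ≤ dirichletKernel (2 ^ s) x := by
  rcases dk_pow_cases s x with h | h <;> rw [h]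
  positivity

lemma dk_pow_le (s : ℕ) (x : ℝ) : dirichletKernel (2 ^ s) x ≤ 2 ^ s := by
  rcases dk_pow_cases s x with h | h <;> rw [h]
  positivity

lemma walsh_mul_dk (s : ℕ) (x : ℝ) : ∀ j < 2 ^ s,
    walsh j x * dirichletKernel (2 ^ s) x = dirichletKernel (2 ^ s) x := by
  induction s with
  | zero => intro j hj; have : j = 0 := by simpa using hj
            subst this; simp [walsh_zero]
  | succ s ih =>
    intro j hj
    rw [dk_pow_succ]
    by_cases h : j < 2 ^ s
    · calc _ = (1 + rademacher s x) * (walsh j x * dirichletKernel (2 ^ s) x) := by ring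
        _ = _ := by rw [ih j h]
    · obtain ⟨i, rfl⟩ := Nat.exists_eq_add_of_le (not_lt.1 h)
      have hi : i < 2 ^ s := by rw [pow_succ] at hj; omega
      rw [walsh_add s i hi]
      calc _ = (rademacher s x + rademacher s x * rademacher s x) *
            (walsh i x * dirichletKernel (2 ^ s) x) := by ring
        _ = _ := by rw [ih i hi, rad_sq]; ring

lemma integrable_dk (n : ℕ) : Integrable (dirichletKernel n) unitMeasure := by
  unfold dirichletKernel
  exact integrable_finsetSum _ fun k _ => integrable_walsh k

lemma integral_dk (n : ℕ) (hn : n ≠ 0) : ∫ x, dirichletKernel n x ∂unitMeasure = 1 := by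
  unfold dirichletKernel
  rw [integral_finsetSum _ fun k _ => integrable_walsh k]
  rw [Finset.sum_eq_single 0]
  · simp [walsh_zero]
  · intro b _ hb; exact integral_walsh b hb
  · intro h; simp at h; exact absurd h hn

lemma abs_dk_le (n : ℕ) (x : ℝ) : |dirichletKernel n x| ≤ n := by
  unfold dirichletKernel
  refine (Finset.abs_sum_le_sum_abs _ _).trans ?_
  simp [abs_walsh]

lemma measurable_dk (n : ℕ) : Measurable (dirichletKernel n) := by
  unfold dirichletKernel
  exact Finset.measurable_fun_sum _ fun k _ => measurable_walsh k

/-- unnormalised Fejer kernel -/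
def JK (n : ℕ) (x : ℝ) : ℝ := ∑ k ∈ Finset.range n, dirichletKernel k x

lemma integrable_JK (n : ℕ) : Integrable (JK n) unitMeasure := by
  unfold JK
  exact integrable_finsetSum _ fun k _ => integrable_dk k

lemma JK_add (s r : ℕ) (h : r ≤ 2 ^ s) (x : ℝ) :
    JK (2 ^ s + r) x = JK (2 ^ s) x + (r * dirichletKernel (2 ^ s) x + rademacher s x * JK r x) := by
  unfold JK
  rw [Finset.sum_range_add]
  congr 1
  rw [Finset.sum_congr rfl (fun k hk => dk_add s k (by have := Finset.mem_range.1 hk; omega) x),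
    Finset.sum_add_distrib, Finset.mul_sum]
  simp

lemma JK_pow_nonneg (s : ℕ) (x : ℝ) : 0 ≤ JK (2 ^ s) x := by
  induction s with
  | zero => simp [JK, dk_zero]
  | succ s ih =>
    rw [pow_succ, mul_two, JK_add s _ le_rfl]
    have := dk_pow_nonneg s x
    rcases rad_eq s x with h | h <;> rw [h]
    · have : 0 ≤ ((2 ^ s : ℕ) : ℝ) * dirichletKernel (2 ^ s) x := by positivity
      linarith
    · have : 0 ≤ ((2 ^ s : ℕ) : ℝ) * dirichletKernel (2 ^ s) x := by positivity
      linarith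

lemma norm_JK_pow (s : ℕ) : ∫ x, |JK (2 ^ s) x| ∂unitMeasure ≤ 2 ^ s := by
  simp_rw [abs_of_nonneg (JK_pow_nonneg s _)]
  unfold JK
  rw [integral_finsetSum _ fun k _ => integrable_dk k]
  calc _ ≤ ∑ k ∈ Finset.range (2 ^ s), (1:ℝ) := by
        refine Finset.sum_le_sum fun k _ => ?_
        by_cases hk : k = 0
        · subst hk; simp [dk_zero]
        · rw [integral_dk k hk]
    _ = _ := by simp

lemma norm_JK (n : ℕ) : ∫ x, |JK n x| ∂unitMeasure ≤ 2 * n := by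
  induction n using Nat.strong_induction_on with
  | _ n ih =>
    by_cases hn : n = 0
    · subst hn; simp [JK]
    obtain ⟨s, hs1, hs2⟩ : ∃ s, 2 ^ s ≤ n ∧ n < 2 ^ (s+1) :=
      ⟨Nat.log 2 n, Nat.pow_log_le_self 2 hn, Nat.lt_pow_succ_log_self (by norm_num) n⟩
    obtain ⟨r, rfl⟩ := Nat.exists_eq_add_of_le hs1
    have hr : r < 2 ^ s := by rw [pow_succ] at hs2; omega
    have ihr := ih r (by have : 0 < 2 ^ s := by positivity
                         omega)
    have hle : ∀ x, |JK (2 ^ s + r) x| ≤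
        |JK (2 ^ s) x| + (r * dirichletKernel (2 ^ s) x + |JK r x|) := by
      intro x
      rw [JK_add s r hr.le]
      refine (abs_add_le _ _).trans (add_le_add le_rfl ((abs_add_le _ _).trans (add_le_add ?_ ?_)))
      · rw [abs_of_nonneg (mul_nonneg (Nat.cast_nonneg _) (dk_pow_nonneg s x))]
      · rw [abs_mul, abs_rad, one_mul]
    have i1 := (integrable_JK (2 ^ s)).abs
    have i2 := (integrable_dk (2 ^ s)).const_mul (r:ℝ)
    have i3 := (integrable_JK r).abs
    have h1 : ∫ x, |JK (2 ^ s + r) x| ∂unitMeasure ≤ ∫ x, (|JK (2 ^ s) x| +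
        (r * dirichletKernel (2 ^ s) x + |JK r x|)) ∂unitMeasure :=
      integral_mono (integrable_JK _).abs (i1.add (i2.add i3)) hle
    have i4 : Integrable (fun x => r * dirichletKernel (2 ^ s) x + |JK r x|) unitMeasure := i2.add i3
    rw [integral_add i1 i4, integral_add i2 i3, integral_const_mul,
      integral_dk _ (by positivity)] at h1
    have h2 := norm_JK_pow s
    have h3 : (r:ℝ) ≤ 2 ^ s := by exact_mod_cast hr.le
    push_cast
    linarith

lemma abel (a : ℕ → ℝ) (M : ℕ) (x : ℝ) :
    ∑ k ∈ Finset.range (M+1), a k * dirichletKernel k x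
      = a M * JK (M+1) x - ∑ k ∈ Finset.range M, (a (k+1) - a k) * JK (k+1) x := by
  induction M with
  | zero => simp [JK]
  | succ M ih =>
    rw [Finset.sum_range_succ, ih, Finset.sum_range_succ _ M]
    have : JK (M+1+1) x = JK (M+1) x + dirichletKernel (M+1) x := by
      unfold JK; rw [Finset.sum_range_succ]
    rw [this]; ring

lemma norm_abel (a : ℕ → ℝ) (M : ℕ) (h0 : 0 ≤ a 0) (hmono : ∀ k < M, a k ≤ a (k+1)) :
    ∫ x, |∑ k ∈ Finset.range (M+1), a k * dirichletKernel k x| ∂unitMeasure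
      ≤ 4 * (M+1) * a M := by
  have haM : 0 ≤ a M ∧ ∑ k ∈ Finset.range M, (a (k+1) - a k) ≤ a M := by
    have h1 : ∑ k ∈ Finset.range M, (a (k+1) - a k) = a M - a 0 := Finset.sum_range_sub a M
    have h2 : 0 ≤ ∑ k ∈ Finset.range M, (a (k+1) - a k) :=
      Finset.sum_nonneg fun k hk => sub_nonneg.2 (hmono k (Finset.mem_range.1 hk))
    constructor <;> linarith
  have hle : ∀ x, |∑ k ∈ Finset.range (M+1), a k * dirichletKernel k x| ≤
      a M * |JK (M+1) x| + ∑ k ∈ Finset.range M, (a (k+1) - a k) * |JK (k+1) x| := by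
    intro x
    rw [abel]
    refine (abs_sub _ _).trans (add_le_add ?_ ?_)
    · rw [abs_mul, abs_of_nonneg haM.1]
    · refine (Finset.abs_sum_le_sum_abs _ _).trans (Finset.sum_le_sum fun k hk => ?_)
      rw [abs_mul, abs_of_nonneg (sub_nonneg.2 (hmono k (Finset.mem_range.1 hk)))]
  have i1 := (integrable_JK (M+1)).abs.const_mul (a M)
  have i2 : ∀ k ∈ Finset.range M, Integrable (fun x => (a (k+1) - a k) * |JK (k+1) x|) unitMeasure :=
    fun k _ => (integrable_JK (k+1)).abs.const_mul _
  have i3 := integrable_finsetSum _ i2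
  have i0 : Integrable (fun x => ∑ k ∈ Finset.range (M+1), a k * dirichletKernel k x) unitMeasure :=
    integrable_finsetSum _ fun k _ => (integrable_dk k).const_mul _
  have h1 := integral_mono i0.abs (i1.add i3) hle
  simp only [Pi.add_apply] at h1
  rw [integral_add i1 i3, integral_const_mul, integral_finsetSum _ i2] at h1
  have h2 : ∑ k ∈ Finset.range M, ∫ x, (a (k+1) - a k) * |JK (k+1) x| ∂unitMeasure
      ≤ ∑ k ∈ Finset.range M, (a (k+1) - a k) * (2 * (M+1)) := by
    refine Finset.sum_le_sum fun k hk => ?_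
    have hk' := Finset.mem_range.1 hk
    rw [integral_const_mul]
    refine mul_le_mul_of_nonneg_left ((norm_JK (k+1)).trans ?_) (sub_nonneg.2 (hmono k hk'))
    have : (k:ℝ) ≤ M := by exact_mod_cast hk'.le
    push_cast; linarith
  rw [← Finset.sum_mul] at h2
  have h3 := mul_le_mul_of_nonneg_left (norm_JK (M+1)) haM.1
  have h4 := mul_le_mul_of_nonneg_right haM.2 (by positivity : (0:ℝ) ≤ 2 * (M+1))
  push_cast at h3
  linarith

/-- unnormalised Norlund logarithmic kernel -/
def HK (n : ℕ) (x : ℝ) : ℝ := ∑ i ∈ Finset.Ico 1 n, dirichletKernel (n - i) x / i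

lemma integrable_HK (n : ℕ) : Integrable (HK n) unitMeasure := by
  unfold HK
  exact integrable_finsetSum _ fun k _ => (integrable_dk _).div_const _

lemma logSum_eq (n : ℕ) : logSum n = ∑ k ∈ Finset.Ico 1 n, (1:ℝ) / k := by
  unfold logSum
  refine Finset.sum_congr ?_ fun _ _ => rfl
  ext k; simp; omega

lemma logSum_nonneg (n : ℕ) : 0 ≤ logSum n := by
  unfold logSum; positivity

lemma logSum_mono {a b : ℕ} (h : a ≤ b) : logSum a ≤ logSum b := by
  rw [logSum_eq, logSum_eq]
  refine Finset.sum_le_sum_of_subset_of_nonneg (Finset.Ico_subset_Ico_right h) ?_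
  intros; positivity

lemma abs_HK_le (n : ℕ) (x : ℝ) : |HK n x| ≤ n * logSum n := by
  unfold HK
  rw [logSum_eq, Finset.mul_sum]
  refine (Finset.abs_sum_le_sum_abs _ _).trans (Finset.sum_le_sum fun i _ => ?_)
  rw [abs_div, Nat.abs_cast, mul_one_div]
  refine div_le_div_of_nonneg_right ((abs_dk_le _ x).trans ?_) (Nat.cast_nonneg _)
  exact_mod_cast Nat.sub_le n i

def EK (s p : ℕ) (x : ℝ) : ℝ :=
  ∑ k ∈ Finset.range (2 ^ s), (1 / ((2 ^ s + p : ℝ) - k)) * dirichletKernel k x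

lemma integrable_EK (s p : ℕ) : Integrable (EK s p) unitMeasure := by
  unfold EK
  exact integrable_finsetSum _ fun k _ => (integrable_dk k).const_mul _

lemma HK_rec (s p : ℕ) (hp : 1 ≤ p) (hps : p ≤ 2 ^ s) (x : ℝ) :
    HK (2 ^ s + p) x = (logSum (p+1) * dirichletKernel (2 ^ s) x + rademacher s x * HK p x)
      + EK s p x := by
  have h2 : 0 < 2 ^ s := by positivity
  unfold HK
  rw [← Finset.sum_Ico_consecutive _ (show 1 ≤ p+1 by omega) (show p+1 ≤ 2 ^ s + p by omega)]
  congr 1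
  · rw [logSum_eq, Finset.sum_mul, Finset.mul_sum]
    have : ∑ i ∈ Finset.Ico 1 p, rademacher s x * (dirichletKernel (p - i) x / i)
        = ∑ i ∈ Finset.Ico 1 (p+1), rademacher s x * (dirichletKernel (p - i) x / i) := by
      rw [Finset.sum_Ico_succ_top hp]; simp [dk_zero]
    rw [this, ← Finset.sum_add_distrib]
    refine Finset.sum_congr rfl fun i hi => ?_
    rw [Finset.mem_Ico] at hi
    rw [show 2 ^ s + p - i = 2 ^ s + (p - i) by omega, dk_add s _ (by omega)]
    ring
  · unfold EK
    rw [Finset.range_eq_Ico, Finset.sum_eq_sum_Ico_succ_bot h2, dk_zero, mul_zero, zero_add]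
    refine Finset.sum_nbij' (fun i => 2 ^ s + p - i) (fun k => 2 ^ s + p - k) ?_ ?_ ?_ ?_ ?_
    · intro i hi; simp at hi ⊢; omega
    · intro i hi; simp at hi ⊢; omega
    · intro i hi; simp at hi ⊢; omega
    · intro i hi; simp at hi ⊢; omega
    · intro i hi
      simp at hi
      rw [Nat.cast_sub (by omega)]
      push_cast
      rw [show (2 ^ s + p - (2 ^ s + p - i) : ℝ) = i by ring]
      ring

lemma norm_EK (s p : ℕ) (hp : 1 ≤ p) (hps : 2 ^ s ≤ 4 * p) :
    ∫ x, |EK s p x| ∂unitMeasure ≤ 16 := by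
  obtain ⟨M, hM⟩ : ∃ M, 2 ^ s = M + 1 := Nat.exists_eq_succ_of_ne_zero (by positivity)
  have hMr : (2:ℝ) ^ s = M + 1 := by exact_mod_cast hM
  have hpr : (1:ℝ) ≤ p := by exact_mod_cast hp
  have hpsr : (M + 1:ℝ) ≤ 4 * p := by rw [← hMr]; exact_mod_cast hps
  unfold EK
  rw [hM]
  have hMn : (0:ℝ) ≤ M := Nat.cast_nonneg M
  refine (norm_abel (fun k => 1 / ((2 ^ s + p : ℝ) - k)) M ?_ ?_).trans ?_
  · rw [Nat.cast_zero, sub_zero]; positivity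
  · intro k hk
    have : (k:ℝ) + 1 ≤ M := by exact_mod_cast hk
    push_cast
    rw [hMr]
    refine one_div_le_one_div_of_le ?_ ?_ <;> linarith
  · rw [hMr, mul_one_div, div_le_iff₀ (by linarith)]
    linarith

lemma HK_step (s p : ℕ) (hp : 1 ≤ p) (hps : 3 * p ≤ 2 ^ s) (hps' : 2 ^ s ≤ 4 * p) :
    ∫ x, |HK p x| ∂unitMeasure + logSum p / 3 - 16 ≤ ∫ x, |HK (2 ^ s + p) x| ∂unitMeasure := by
  have hc : logSum p ≤ logSum (p+1) := logSum_mono (by omega)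
  have hc0 := logSum_nonneg p
  have hb : ∀ x, |HK p x| + logSum (p+1) / 3 * dirichletKernel (2 ^ s) x ≤
      |HK (2 ^ s + p) x| + |EK s p x| := by
    intro x
    have h1 : |logSum (p+1) * dirichletKernel (2 ^ s) x + rademacher s x * HK p x| ≤
      |HK (2 ^ s + p) x| + |EK s p x| := by
      have := HK_rec s p hp (by omega) x
      rw [show logSum (p+1) * dirichletKernel (2 ^ s) x + rademacher s x * HK p x
        = HK (2 ^ s + p) x - EK s p x by rw [this]; ring]
      exact abs_sub _ _
    refine le_trans ?_ h1
    have h3 : |rademacher s x * HK p x| = |HK p x| := by rw [abs_mul, abs_rad, one_mul]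
    rcases dk_pow_cases s x with h | h
    · rw [h, mul_zero, mul_zero, add_zero, zero_add, h3]
    · rw [h]
      have h4 := abs_HK_le p x
      have h5 : (3:ℝ) * p ≤ 2 ^ s := by exact_mod_cast hps
      have h6 : 3 * |HK p x| ≤ 2 ^ s * logSum (p+1) := by
        calc 3 * |HK p x| ≤ (3 * p) * logSum p := by linarith
          _ ≤ _ := mul_le_mul h5 hc hc0 (by positivity)
      have h7 := abs_sub_abs_le_abs_sub (logSum (p+1) * 2 ^ s) (-(rademacher s x * HK p x))
      rw [abs_neg, h3, sub_neg_eq_add] at h7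
      have h8 := le_abs_self (logSum (p+1) * 2 ^ s)
      linarith
  have i1 := (integrable_HK p).abs
  have i2 := (integrable_dk (2 ^ s)).const_mul (logSum (p+1) / 3)
  have i3 := (integrable_HK (2 ^ s + p)).abs
  have i4 := (integrable_EK s p).abs
  have h1 := integral_mono (i1.add i2) (i3.add i4) hb
  simp only [Pi.add_apply] at h1
  rw [integral_add i1 i2, integral_add i3 i4, integral_const_mul, integral_dk _ (by positivity)] at h1
  have h2 := norm_EK s p hp hps'
  linarith

lemma pIdx_succ (n : ℕ) : pIdx (n+1) = 2 ^ (2 * (n+1)) + pIdx n := by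
  unfold pIdx; rw [Finset.sum_range_succ, pow_mul]; norm_num; ring

lemma pIdx_three (n : ℕ) : 3 * pIdx n + 1 = 2 ^ (2 * (n+1)) := by
  induction n with
  | zero => simp [pIdx]
  | succ n ih =>
    rw [pIdx_succ, show 2 * (n+1+1) = 2 * (n+1) + 2 by ring, pow_add]; omega

lemma pIdx_pos (n : ℕ) : 1 ≤ pIdx n := by
  have := pIdx_three n
  have : 2 ^ (2 * (n+1)) = 4 * 2 ^ (2 * n) := by rw [show 2 * (n+1) = 2*n+2 by ring, pow_add]; ring
  have : 0 < 2 ^ (2 * n) := by positivity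
  omega

lemma pIdx_four (n : ℕ) : pIdx (n+1) = 4 * pIdx n + 1 := by
  have := pIdx_three n
  have := pIdx_succ n
  omega

lemma logSum_four (p : ℕ) (hp : 1 ≤ p) :
    logSum p + 3 / 4 ≤ logSum (4 * p + 1) ∧ logSum (4 * p + 1) ≤ logSum p + 4 := by
  have hpr : (1:ℝ) ≤ p := by exact_mod_cast hp
  rw [logSum_eq (4 * p + 1), logSum_eq p,
    ← Finset.sum_Ico_consecutive _ hp (show p ≤ 4 * p + 1 by omega)]
  have hcard : ((Finset.Ico p (4 * p + 1)).card : ℝ) = 3 * p + 1 := by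
    rw [Nat.card_Ico, show 4 * p + 1 - p = 3 * p + 1 by omega]; push_cast; ring
  constructor
  · have := Finset.card_nsmul_le_sum (Finset.Ico p (4 * p + 1)) (fun k : ℕ => (1:ℝ) / k)
      (1 / (4 * p)) (by
        intro k hk
        rw [Finset.mem_Ico] at hk
        have h1 : (k:ℝ) ≤ 4 * p := by exact_mod_cast (by omega : k ≤ 4 * p)
        have h2 : (0:ℝ) < k := by exact_mod_cast (by omega : 0 < k)
        exact one_div_le_one_div_of_le h2 h1)
    rw [nsmul_eq_mul, hcard] at this
    have h3 : (3:ℝ) / 4 ≤ (3 * p + 1) * (1 / (4 * p)) := by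
      rw [mul_one_div, le_div_iff₀ (by linarith)]; linarith
    linarith
  · have := Finset.sum_le_card_nsmul (Finset.Ico p (4 * p + 1)) (fun k : ℕ => (1:ℝ) / k)
      (1 / p) (by
        intro k hk
        rw [Finset.mem_Ico] at hk
        have h1 : (p:ℝ) ≤ k := by exact_mod_cast hk.1
        exact one_div_le_one_div_of_le (by linarith) h1)
    rw [nsmul_eq_mul, hcard] at this
    have h3 : (3 * p + 1) * (1 / (p:ℝ)) ≤ 4 := by
      rw [mul_one_div, div_le_iff₀ (by linarith)]; linarith
    linarith

lemma logSum_pIdx (n : ℕ) : 3 / 4 * (n:ℝ) ≤ logSum (pIdx n) ∧ logSum (pIdx n) ≤ 4 * n := by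
  induction n with
  | zero => simp [pIdx, logSum]
  | succ n ih =>
    have := logSum_four (pIdx n) (pIdx_pos n)
    rw [pIdx_four]
    push_cast
    constructor <;> linarith [this.1, this.2, ih.1, ih.2]

lemma norm_HK_pIdx (n : ℕ) :
    (n:ℝ) * (n - 1) / 8 - 16 * n ≤ ∫ x, |HK (pIdx n) x| ∂unitMeasure := by
  induction n with
  | zero => simp; positivity
  | succ n ih =>
    have h := HK_step (2 * (n+1)) (pIdx n) (pIdx_pos n) (by have := pIdx_three n; omega)
      (by have := pIdx_three n; have := pIdx_pos n; omega)
    rw [← pIdx_succ] at h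
    have := (logSum_pIdx n).1
    push_cast
    nlinarith

lemma m₀_large : 1000 ≤ m₀ := by
  have hne : {m : ℕ | 1 < mTilde m}.Nonempty := by
    obtain ⟨K, hK⟩ : ∃ K : ℕ, K = 2 ^ 21 := ⟨_, rfl⟩
    refine ⟨2 * (K + 1), ?_⟩
    have h1 : logSum (pIdx K) ≤ logSum (pIdx (K+1) - 1) := by
      apply logSum_mono
      have := pIdx_four K
      omega
    have h2 := (logSum_pIdx K).1
    have hKr : (K:ℝ) = 2 ^ 21 := by rw [hK]; norm_num
    rw [hKr] at h2
    show 1 < mTilde _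
    unfold mTilde
    rw [Nat.mul_div_cancel_left _ (by norm_num : 0 < 2)]
    have : (2:ℤ) ≤ ⌊logSum (pIdx (K+1) - 1) / 16 - 2 ^ 15⌋ := by
      rw [Int.le_floor]; push_cast; norm_num at h2 ⊢; linarith
    omega
  have hmem : 1 < mTilde m₀ := Nat.sInf_mem hne
  unfold mTilde at hmem
  have h1 : (1:ℤ) ≤ ⌊logSum (pIdx (m₀ / 2) - 1) / 16 - 2 ^ 15⌋ := hmem.le
  rw [Int.le_floor] at h1
  have h2 : logSum (pIdx (m₀ / 2) - 1) ≤ logSum (pIdx (m₀ / 2)) := logSum_mono (Nat.sub_le _ _)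
  have h3 := (logSum_pIdx (m₀ / 2)).2
  have h4 : ((m₀ / 2 : ℕ) : ℝ) ≤ (m₀ : ℝ) / 2 := Nat.cast_div_le
  have h5 : (1000:ℝ) ≤ m₀ := by push_cast at h1; linarith
  exact_mod_cast h5

lemma norm_HK_large (n : ℕ) (hn : m₀ ≤ n) :
    (n:ℝ) / 256 ≤ (logSum (pIdx n))⁻¹ * ∫ x, |HK (pIdx (n - 1)) x| ∂unitMeasure := by
  have h0 : 1000 ≤ n := m₀_large.trans hn
  obtain ⟨k, rfl⟩ : ∃ k, n = k + 1 := ⟨n - 1, by omega⟩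
  have hk : (1000:ℝ) ≤ (k:ℝ) + 1 := by exact_mod_cast h0
  have h1 := norm_HK_pIdx k
  have h2 := logSum_pIdx (k+1)
  rw [Nat.add_sub_cancel]
  push_cast at h2 ⊢
  have hpos : 0 < logSum (pIdx (k+1)) := by linarith [h2.1]
  rw [inv_mul_eq_div, le_div_iff₀ hpos]
  have h4 : ((k:ℝ) + 1) / 256 * logSum (pIdx (k+1)) ≤ ((k:ℝ) + 1) / 256 * (4 * (k + 1)) :=
    mul_le_mul_of_nonneg_left h2.2 (by positivity)
  refine h4.trans (le_trans ?_ h1)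
  clear h4 h1 h2 h0 hn hpos
  nlinarith

lemma cubeMeasure_eq (d : ℕ) : cubeMeasure d = Measure.pi (fun _ : Fin d => unitMeasure) := by
  unfold cubeMeasure unitCube unitMeasure
  rw [volume_pi, Measure.restrict_pi_pi]

lemma cube_integral_prod {d : ℕ} (h : Fin d → ℝ → ℝ) :
    ∫ x, ∏ i, h i (x i) ∂(cubeMeasure d) = ∏ i, ∫ y, h i y ∂unitMeasure := by
  rw [cubeMeasure_eq]
  exact integral_fintype_prod_eq_prod (μ := fun _ : Fin d => unitMeasure) h

lemma walshCoef_prod {d : ℕ} (t : ℝ) (g : Fin d → ℝ → ℝ) (j : Fin d → ℕ) :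
    walshCoef (fun x => t * ∏ i, g i (x i)) j
      = t * ∏ i, ∫ y, g i y * walsh (j i) y ∂unitMeasure := by
  unfold walshCoef
  rw [← cube_integral_prod (fun i y => g i y * walsh (j i) y), ← integral_const_mul]
  refine integral_congr_ae (Filter.Eventually.of_forall fun x => ?_)
  simp only [Finset.prod_mul_distrib]
  ring

lemma rect_prod {d : ℕ} (t : ℝ) (g : Fin d → ℝ → ℝ) (N : Fin d → ℕ) (x : Fin d → ℝ) :
    rectPartialSum (fun x => t * ∏ i, g i (x i)) N x
      = t * ∏ i, ∑ k ∈ Finset.range (N i), (∫ y, g i y * walsh k y ∂unitMeasure) * walsh k (x i) := by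
  unfold rectPartialSum
  rw [Finset.prod_univ_sum, Finset.mul_sum]
  refine Finset.sum_congr rfl fun j _ => ?_
  rw [walshCoef_prod, Finset.prod_mul_distrib]
  ring

lemma mixed_prod {d : ℕ} (B : Finset (Fin d)) (t : ℝ) (g : Fin d → ℝ → ℝ) (N : ℕ)
    (x : Fin d → ℝ) :
    mixedLogMean B (fun x => t * ∏ i, g i (x i)) (fun _ => N) x
      = t * ∏ j, ((logSum N)⁻¹ * ∑ i ∈ Finset.Ico 1 N,
        (∑ k ∈ Finset.range (if j ∈ B then N - i else i),
          (∫ y, g j y * walsh k y ∂unitMeasure) * walsh k (x j)) / i) := by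
  unfold mixedLogMean
  rw [Finset.prod_mul_distrib, Finset.prod_inv_distrib, Finset.prod_univ_sum, mul_left_comm]
  congr 1
  rw [Finset.mul_sum]
  refine Finset.sum_congr rfl fun i _ => ?_
  rw [rect_prod, Finset.prod_div_distrib, mul_div_assoc]

/-- the one-dimensional test function -/
def phi (n : ℕ) (x : ℝ) : ℝ := rademacher (2 * n) x * dirichletKernel (2 ^ (2 * n)) x

lemma measurable_phi (n : ℕ) : Measurable (phi n) := (measurable_rad _).mul (measurable_dk _)

lemma abs_phi (n : ℕ) (x : ℝ) : |phi n x| = dirichletKernel (2 ^ (2 * n)) x := by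
  unfold phi; rw [abs_mul, abs_rad, one_mul, abs_of_nonneg (dk_pow_nonneg _ x)]

lemma phi_coef_low (n k : ℕ) (hk : k < 2 ^ (2 * n)) :
    ∫ y, phi n y * walsh k y ∂unitMeasure = 0 := by
  have h : ∀ y, phi n y * walsh k y =
      ∑ j ∈ Finset.range (2 ^ (2 * n)), walsh (2 ^ (2 * n) + j) y := by
    intro y
    unfold phi
    rw [mul_assoc, mul_comm _ (walsh k y), walsh_mul_dk _ y k hk, dirichletKernel, Finset.mul_sum]
    exact Finset.sum_congr rfl fun j hj => (walsh_add _ j (Finset.mem_range.1 hj) y).symm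
  simp_rw [h]
  rw [integral_finsetSum _ fun k _ => integrable_walsh _]
  refine Finset.sum_eq_zero fun j _ => integral_walsh _ ?_
  have : 0 < 2 ^ (2 * n) := by positivity
  omega

lemma phi_coef_high (n k : ℕ) (hk : k < 2 ^ (2 * n)) :
    ∫ y, phi n y * walsh (2 ^ (2 * n) + k) y ∂unitMeasure = 1 := by
  have h : ∀ y, phi n y * walsh (2 ^ (2 * n) + k) y = dirichletKernel (2 ^ (2 * n)) y := by
    intro y
    unfold phi
    rw [walsh_add _ k hk]
    calc _ = (rademacher (2 * n) y * rademacher (2 * n) y) *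
          (walsh k y * dirichletKernel (2 ^ (2 * n)) y) := by ring
      _ = _ := by rw [rad_sq, walsh_mul_dk _ y k hk, one_mul]
  simp_rw [h]
  exact integral_dk _ (by positivity)

lemma phi_partial (n N : ℕ) (hN : N ≤ 2 * 2 ^ (2 * n)) (x : ℝ) :
    ∑ k ∈ Finset.range N, (∫ y, phi n y * walsh k y ∂unitMeasure) * walsh k x
      = rademacher (2 * n) x * dirichletKernel (N - 2 ^ (2 * n)) x := by
  by_cases h : N ≤ 2 ^ (2 * n)
  · rw [Nat.sub_eq_zero_of_le h, dk_zero, mul_zero]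
    refine Finset.sum_eq_zero fun k hk => ?_
    rw [phi_coef_low n k (lt_of_lt_of_le (Finset.mem_range.1 hk) h), zero_mul]
  · obtain ⟨r, rfl⟩ := Nat.exists_eq_add_of_le (not_le.1 h).le
    rw [Finset.sum_range_add, Nat.add_sub_cancel_left, dirichletKernel, Finset.mul_sum]
    rw [Finset.sum_eq_zero (fun k hk => by
      rw [phi_coef_low n k (Finset.mem_range.1 hk), zero_mul]), zero_add]
    refine Finset.sum_congr rfl fun k hk => ?_
    have hk' : k < 2 ^ (2 * n) := by have := Finset.mem_range.1 hk; omega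
    rw [phi_coef_high n k hk', one_mul, walsh_add _ k hk']

lemma phi_mean (n : ℕ) (hn : 1 ≤ n) (x : ℝ) :
    ∑ i ∈ Finset.Ico 1 (pIdx n), (∑ k ∈ Finset.range (pIdx n - i),
        (∫ y, phi n y * walsh k y ∂unitMeasure) * walsh k x) / i
      = rademacher (2 * n) x * HK (pIdx (n - 1)) x := by
  obtain ⟨m, rfl⟩ : ∃ m, n = m + 1 := ⟨n - 1, by omega⟩
  rw [Nat.add_sub_cancel]
  have h1 := pIdx_succ m
  have h2 := pIdx_three m
  unfold HK
  rw [Finset.mul_sum, ← Finset.sum_Ico_consecutive _ (pIdx_pos m) (show pIdx m ≤ pIdx (m+1) by omega)]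
  have h3 : ∀ i, pIdx (m+1) - i - 2 ^ (2 * (m+1)) = pIdx m - i := by intro i; omega
  rw [Finset.sum_congr (g := fun i : ℕ => rademacher (2 * (m+1)) x *
    (dirichletKernel (pIdx m - i) x / i)) rfl ?_, add_eq_left]
  · refine Finset.sum_eq_zero fun i hi => ?_
    rw [phi_partial _ _ (by omega), h3, Nat.sub_eq_zero_of_le (Finset.mem_Ico.1 hi).1, dk_zero]
    simp
  · intro i _
    rw [phi_partial _ _ (by omega), h3, mul_div_assoc]

lemma one_mean (N : ℕ) (hN : logSum N ≠ 0) (x : ℝ) :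
    (logSum N)⁻¹ * ∑ i ∈ Finset.Ico 1 N, (∑ k ∈ Finset.range i,
        (∫ y, 1 * walsh k y ∂unitMeasure) * walsh k x) / i = 1 := by
  have : ∑ i ∈ Finset.Ico 1 N, (∑ k ∈ Finset.range i,
        (∫ y, 1 * walsh k y ∂unitMeasure) * walsh k x) / i = logSum N := by
    rw [logSum_eq]
    refine Finset.sum_congr rfl fun i hi => ?_
    congr 1
    rw [Finset.sum_eq_single 0]
    · simp [walsh_zero]
    · intro k _ hk; simp_rw [one_mul]; rw [integral_walsh k hk, zero_mul]
    · intro h; rw [Finset.mem_Ico] at hi; simp at h; omega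
  rw [this, inv_mul_cancel₀ hN]

/-- operator-norm lower bound: for every Young function `Q` and `n ≥ m₀`
with `Q(2^{2n|B|}) ≥ 2^{2n|B|}`, the norm of `L_{p_n(B)} ∘ R_{p_n(B')}` from `L_Q(I^d)` to
`L^1(I^d)` is at least `c · 2^{2n|B|} n^{|B|} / Q(2^{2n|B|})`. -/
theorem stmt15 (d : ℕ) (hd : 1 ≤ d) (B : Finset (Fin d)) (hB : B.Nonempty) :
    ∃ c > (0:ℝ), ∀ Q : YoungFunction, ∀ n : ℕ, m₀ ≤ n →
      (2 : ℝ) ^ (2 * n * B.card) ≤ Q.toFun (2 ^ (2 * n * B.card)) →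
      ∀ ε > (0:ℝ), ∃ f : (Fin d → ℝ) → ℝ, MemOrlicz Q f ∧ orliczNorm Q f ≤ 1 ∧
        c * 2 ^ (2 * n * B.card) * (n : ℝ) ^ B.card / Q.toFun (2 ^ (2 * n * B.card)) - ε <
          ∫ x, |mixedLogMean B f (fun _ => pIdx n) x| ∂(cubeMeasure d) := by
  refine ⟨(1 / 256) ^ B.card, by positivity, ?_⟩
  intro Q n hn hQ ε hε
  have hn1 : 1 ≤ n := by have := m₀_large; omega
  set M : ℝ := 2 ^ (2 * n * B.card) with hM
  have hMpos : 0 < M := by positivity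
  have hQpos : 0 < Q.toFun M := lt_of_lt_of_le hMpos hQ
  set t : ℝ := M / Q.toFun M with ht
  have htpos : 0 < t := by positivity
  have ht1 : t ≤ 1 := (div_le_one hQpos).2 hQ
  set g : Fin d → ℝ → ℝ := fun j => if j ∈ B then phi n else fun _ => 1 with hg
  have hgm : ∀ j, Measurable (g j) := by
    intro j; simp only [hg]; split_ifs
    · exact measurable_phi n
    · exact measurable_const
  have hfm : Measurable (fun x : Fin d → ℝ => t * ∏ i, g i (x i)) := by
    refine Measurable.const_mul (Finset.measurable_fun_prod _ fun i _ => ?_) t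
    exact (hgm i).comp (measurable_pi_apply i)
  have hgabs : ∀ j y, |g j y| ≤ (if j ∈ B then 2 ^ (2 * n) else 1) := by
    intro j y; simp only [hg]; split_ifs
    · rw [abs_phi]; exact dk_pow_le _ y
    · simp
  have hgint : ∀ j, ∫ y, |g j y| ∂unitMeasure = 1 := by
    intro j; simp only [hg]; split_ifs
    · simp_rw [abs_phi]; exact integral_dk _ (by positivity)
    · simp
  have hP : ∀ x : Fin d → ℝ, ∏ i, |g i (x i)| ≤ M := by
    intro x
    calc _ ≤ ∏ i : Fin d, (if i ∈ B then (2:ℝ) ^ (2 * n) else 1) :=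
          Finset.prod_le_prod (fun i _ => abs_nonneg _) fun i _ => hgabs i _
      _ = M := by rw [Finset.prod_ite_mem, Finset.univ_inter, Finset.prod_const, hM, ← pow_mul]
  have hQle : ∀ x : Fin d → ℝ, Q.toFun (|t * ∏ i, g i (x i)| / 1) ≤ ∏ i, |g i (x i)| := by
    intro x
    rw [div_one, abs_mul, abs_of_pos htpos, Finset.abs_prod]
    set P := ∏ i, |g i (x i)| with hPdef
    have hP0 : 0 ≤ P := Finset.prod_nonneg fun i _ => abs_nonneg _
    have hPM : P ≤ M := hP x
    have hs0 : 0 ≤ t * P / M := by positivity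
    have hs1 : t * P / M ≤ 1 := by
      rw [div_le_one hMpos]
      calc t * P ≤ 1 * P := mul_le_mul_of_nonneg_right ht1 hP0
        _ ≤ M := by linarith
    have := Q.convexOn.2 (Set.mem_univ (0:ℝ)) (Set.mem_univ M) (sub_nonneg.2 hs1) hs0 (by ring)
    simp only [smul_eq_mul, mul_zero, zero_add, Q.map_zero] at this
    rw [div_mul_cancel₀ _ hMpos.ne'] at this
    refine this.trans (le_of_eq ?_)
    rw [ht]; field_simp
  have hPi : Integrable (fun x : Fin d → ℝ => ∏ i, |g i (x i)|) (cubeMeasure d) := by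
    have : IsFiniteMeasure (cubeMeasure d) := by rw [cubeMeasure_eq]; infer_instance
    refine Integrable.of_bound (Measurable.aestronglyMeasurable ?_) M ?_
    · refine Finset.measurable_fun_prod _ fun i _ => ?_
      exact (((hgm i).comp (measurable_pi_apply i))).abs
    · refine Filter.Eventually.of_forall fun x => ?_
      rw [Real.norm_eq_abs, abs_of_nonneg (Finset.prod_nonneg fun i _ => abs_nonneg _)]
      exact hP x
  have hQi : Integrable (fun x : Fin d → ℝ => Q.toFun (|t * ∏ i, g i (x i)| / 1))
      (cubeMeasure d) := by
    refine hPi.mono' ?_ ?_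
    · exact (Q.continuous.measurable.comp ((hfm.abs).div_const 1)).aestronglyMeasurable
    · refine Filter.Eventually.of_forall fun x => ?_
      rw [Real.norm_eq_abs, abs_of_nonneg (Q.nonneg _)]
      exact hQle x
  have hone : (1:ℝ) ∈ orliczSet Q (fun x : Fin d → ℝ => t * ∏ i, g i (x i)) := by
    refine ⟨one_pos, hQi, (integral_mono hQi hPi hQle).trans (le_of_eq ?_)⟩
    rw [cube_integral_prod (fun i y => |g i y|)]
    exact Finset.prod_eq_one fun i _ => hgint i
  refine ⟨fun x => t * ∏ i, g i (x i), ⟨hfm, 1, hone⟩,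
    csInf_le ⟨0, fun k hk => hk.1.le⟩ hone, ?_⟩
  have hlpos : 0 < logSum (pIdx n) := by
    have := (logSum_pIdx n).1
    have h1 : (1:ℝ) ≤ n := by exact_mod_cast hn1
    linarith
  have hmean : ∀ x, |mixedLogMean B (fun x => t * ∏ i, g i (x i)) (fun _ => pIdx n) x|
      = t * ∏ j, (fun y => if j ∈ B then (logSum (pIdx n))⁻¹ * |HK (pIdx (n - 1)) y| else 1)
        (x j) := by
    intro x
    rw [mixed_prod, abs_mul, abs_of_pos htpos, Finset.abs_prod]
    congr 1
    refine Finset.prod_congr rfl fun j _ => ?_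
    simp only [hg]
    by_cases hj : j ∈ B
    · simp only [if_pos hj]
      rw [phi_mean n hn1, abs_mul, abs_mul, abs_rad, one_mul, abs_of_pos (inv_pos.2 hlpos)]
    · simp only [if_neg hj]
      rw [one_mean _ hlpos.ne', abs_one]
  simp_rw [hmean]
  rw [integral_const_mul, cube_integral_prod (fun j y =>
    if j ∈ B then (logSum (pIdx n))⁻¹ * |HK (pIdx (n - 1)) y| else 1)]
  have hlow : ((n:ℝ) / 256) ^ B.card ≤ ∏ j : Fin d, ∫ y,
      (if j ∈ B then (logSum (pIdx n))⁻¹ * |HK (pIdx (n - 1)) y| else 1) ∂unitMeasure := by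
    calc ((n:ℝ) / 256) ^ B.card = ∏ j : Fin d, (if j ∈ B then (n:ℝ) / 256 else 1) := by
          rw [Finset.prod_ite_mem, Finset.univ_inter, Finset.prod_const]
      _ ≤ _ := by
          refine Finset.prod_le_prod (fun i _ => by split_ifs <;> positivity) fun j _ => ?_
          by_cases hj : j ∈ B
          · simp only [if_pos hj]
            rw [integral_const_mul]
            exact norm_HK_large n hn
          · simp [if_neg hj]
  have hfin := mul_le_mul_of_nonneg_left hlow htpos.le
  have heq : (1 / 256) ^ B.card * M * (n:ℝ) ^ B.card / Q.toFun M = t * ((n:ℝ) / 256) ^ B.card := by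
    rw [ht, div_pow, div_pow, one_pow]; ring
  rw [heq]
  linarith

end
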